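/- There exist absolute constants 0 < c ≤ C such that for all x, y > 1 and t > 0 with xy > t, one has c·E ≤ p₁(t,x,y) ≤ C·E, where E = min(1, (x−1)(y−1)/t) · (xyt)^{−1/2} · exp(−(x−y)²/(2t)). -/

import Mathlib

open Real MeasureTheory

/-- Modified Bessel function of the first kind, order 0. -/
noncomputable def I0 (z : ℝ) : ℝ := ∑' n : ℕ, (z/2)^(2*n) / ((n.factorial : ℝ))^2

/-- Modified Bessel function of the first kind, order 1. -/
noncomputable def I1 (z : ℝ) : ℝ :=
  ∑' n : ℕ, (z/2)^(2*n+1) / ((n.factorial : ℝ) * ((n+1).factorial : ℝ))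

/-- Heat kernel of the Bessel operator `d²/dx² + (1/x) d/dx` on `(0,∞)`
with respect to the measure `y dy`. -/
noncomputable def pk (t x y : ℝ) : ℝ :=
  t⁻¹ * Real.exp (-(x^2 + y^2)/(2*t)) * I0 (x*y/t)

/-- The function `h` from (AC): Dirichlet heat kernel of `(1/2) d²/dx²` on `(1,∞)`
multiplied by `(xy)⁻¹`. -/
noncomputable def hker (t x y : ℝ) : ℝ :=
  (2*Real.pi*t)^(-(1:ℝ)/2) * (x*y)⁻¹ *
    (Real.exp (-(x-y)^2/(2*t)) - Real.exp (-(x+y-2)^2/(2*t)))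

/-- Bundled hypotheses on the Dirichlet heat kernel `p₁` of the Bessel operator on
`(1,∞)` and on the density `q` of the first hitting time of `1` by the
2-dimensional Bessel process. -/
structure BesselHK (p₁ : ℝ → ℝ → ℝ → ℝ) (q : ℝ → ℝ → ℝ) : Prop where
  meas_p₁ : Measurable fun z : ℝ × ℝ × ℝ => p₁ z.1 z.2.1 z.2.2
  meas_q : Measurable fun z : ℝ × ℝ => q z.1 z.2
  p₁_nonneg : ∀ ⦃t x y : ℝ⦄, 0 < t → 1 < x → 1 < y → 0 ≤ p₁ t x y
  q_nonneg : ∀ ⦃x s : ℝ⦄, 1 < x → 0 < s → 0 ≤ q x s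
  hunt : ∀ ⦃t x y : ℝ⦄, 0 < t → 1 < x → 1 < y →
    p₁ t x y = pk t x y - ∫ u in Set.Ioo 0 t, q x u * pk (t-u) 1 y
  symm : ∀ ⦃t x y : ℝ⦄, 0 < t → 1 < x → 1 < y → p₁ t x y = p₁ t y x
  ck : ∀ ⦃t s x y : ℝ⦄, 0 < t → 0 < s → 1 < x → 1 < y →
    p₁ (t+s) x y = ∫ w in Set.Ioi (1:ℝ), p₁ t x w * p₁ s w y * w
  mass : ∀ ⦃t x : ℝ⦄, 0 < t → 1 < x →
    (∫ y in Set.Ioi (1:ℝ), p₁ t x y * y) = ∫ u in Set.Ioi t, q x u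
  q1 : ∃ c C : ℝ, 0 < c ∧ c ≤ C ∧ ∀ ⦃x s : ℝ⦄, 1 < x → 0 < s →
    ((s < 2*x →
      c * (((x-1)/Real.sqrt x) * s^(-(3:ℝ)/2) * Real.exp (-(x-1)^2/(2*s))) ≤ q x s ∧
      q x s ≤ C * (((x-1)/Real.sqrt x) * s^(-(3:ℝ)/2) * Real.exp (-(x-1)^2/(2*s)))) ∧
     (2*x ≤ s →
      c * (((x-1)/x) * ((1+Real.log x)/((1+Real.log (s+x))*(1+Real.log (1+s/x)))) *
        s⁻¹ * Real.exp (-(x-1)^2/(2*s))) ≤ q x s ∧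
      q x s ≤ C * (((x-1)/x) * ((1+Real.log x)/((1+Real.log (s+x))*(1+Real.log (1+s/x)))) *
        s⁻¹ * Real.exp (-(x-1)^2/(2*s)))))
  q2 : ∀ ⦃x s : ℝ⦄, 1 < x → 0 < s →
    ((x-1)/Real.sqrt (2*Real.pi*x)) * s^(-(3:ℝ)/2) * Real.exp (-(x-1)^2/(2*s)) ≤ q x s
  surv : ∃ c' C' : ℝ, 0 < c' ∧ c' ≤ C' ∧ ∀ ⦃t x : ℝ⦄, 0 < t → 1 < x →
    c' * min 1 (Real.log x / Real.log (1+Real.sqrt t)) ≤ (∫ u in Set.Ioi t, q x u) ∧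
    (∫ u in Set.Ioi t, q x u) ≤ C' * min 1 (Real.log x / Real.log (1+Real.sqrt t))
  ac : ∀ ⦃t x y : ℝ⦄, 0 < t → 1 < x → 1 < y →
    Real.sqrt (x*y) * hker t x y ≤ p₁ t x y ∧
    p₁ t x y ≤ Real.exp (t/8) * Real.sqrt (x*y) * hker t x y

/-!
Write `G = (xyt)^(-1/2) exp(-(x-y)²/(2t))`.

* The comparison (AC) with the half-line Brownian kernel gives the lower bound for every `t`,
  because `√(xy) h = (2π)^(-1/2) (1 - exp(-2(x-1)(y-1)/t)) G`. It also gives the upper bound for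
  bounded `t`.
* Hunt's formula gives `p₁ ≤ pk ≤ G`. This is enough for large `t` if `x, y ≥ 2`, since then
  `(x-1)(y-1) ≥ xy/4 > t/4`.
* If `t` is large and `x < 2`, run the kernel for unit time first: `p₁(1,x,w)` contributes the
  factor `(x-1)(w-1)`, while the Gaussians in the Chapman-Kolmogorov integral combine to a Brownian
  bridge, which concentrates `w` around `m = x + (y-x)/t`. So `w - 1` costs about `|m-1| + 1`, and
  `t < xy` bounds this by a multiple of `(y-1)/t`.
* The case `y < 2` is the same for the transposed kernel.
-/

theorem two_mul_add_one_mul_centralBinom_sq_le (n : ℕ) :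
    (2 * n + 1) * n.centralBinom ^ 2 ≤ 16 ^ n := by
  induction n with
  | zero => simp
  | succ n ih =>
    refine Nat.le_of_mul_le_mul_left ?_ (show 0 < (n + 1) ^ 2 by positivity)
    calc (n + 1) ^ 2 * ((2 * (n + 1) + 1) * (n + 1).centralBinom ^ 2)
        = (2 * n + 3) * ((n + 1) * (n + 1).centralBinom) ^ 2 := by ring
      _ = 4 * ((2 * n + 1) * (2 * n + 3)) * ((2 * n + 1) * n.centralBinom ^ 2) := by
        rw [Nat.succ_mul_centralBinom_succ]; ring
      _ ≤ 4 * (4 * (n + 1) ^ 2) * 16 ^ n := by gcongr ?_ * ?_; nlinarith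
      _ = (n + 1) ^ 2 * 16 ^ (n + 1) := by ring

theorem I0_term_eq (z : ℝ) (n : ℕ) :
    (z / 2) ^ (2 * n) / (n.factorial : ℝ) ^ 2 =
      z ^ (2 * n) / (2 * n).factorial * (n.centralBinom / 4 ^ n) := by
  have hfac : (n.centralBinom : ℝ) * n.factorial ^ 2 = (2 * n).factorial := by
    have h := Nat.choose_mul_factorial_mul_factorial (Nat.le_mul_of_pos_left n two_pos)
    rw [← Nat.centralBinom_eq_two_mul_choose, show 2 * n - n = n by lia] at h
    rw [← h]
    push_cast
    ring
  have : (n.centralBinom : ℝ) ≠ 0 := mod_cast n.centralBinom_ne_zero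
  rw [← hfac, div_pow, pow_mul 2 2 n, show (2 : ℝ) ^ 2 = 4 by norm_num]
  field_simp

theorem I0_term_le {z : ℝ} (hz : 0 < z) (n : ℕ) :
    (z / 2) ^ (2 * n) / (n.factorial : ℝ) ^ 2 ≤
      (√z)⁻¹ * (z ^ (2 * n) / (2 * n).factorial + z ^ (2 * n + 1) / (2 * n + 1).factorial) := by
  set b : ℝ := n.centralBinom / 4 ^ n with hb
  have hb_sq : b ^ 2 ≤ 1 / (2 * n + 1) := by
    have hpow : ((4 : ℝ) ^ n) ^ 2 = 16 ^ n := by rw [pow_right_comm]; norm_num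
    rw [hb, div_pow, hpow, div_le_div_iff₀ (by positivity) (by positivity), one_mul, mul_comm]
    exact_mod_cast two_mul_add_one_mul_centralBinom_sq_le n
  have hz_sqrt : 0 < √z := Real.sqrt_pos.2 hz
  have amgm : b ≤ (√z)⁻¹ + √z * b ^ 2 := by
    rw [inv_eq_one_div, ← sub_le_iff_le_add, le_div_iff₀ hz_sqrt]
    nlinarith [sq_nonneg (√z * b - 1 / 2)]
  calc (z / 2) ^ (2 * n) / (n.factorial : ℝ) ^ 2
      = z ^ (2 * n) / (2 * n).factorial * b := I0_term_eq z n
    _ ≤ z ^ (2 * n) / (2 * n).factorial * ((√z)⁻¹ + √z * (1 / (2 * n + 1))) := by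
      gcongr
      exact amgm.trans (by gcongr)
    _ = _ := by
      rw [Nat.factorial_succ, pow_succ]
      push_cast
      field_simp
      rw [Real.sq_sqrt hz.le]

theorem I0_nonneg (z : ℝ) : 0 ≤ I0 z :=
  tsum_nonneg fun n => by rw [pow_mul]; positivity

theorem I0_le_exp_div_sqrt {z : ℝ} (hz : 0 < z) : I0 z ≤ exp z / √z := by
  have hexp := ((Real.hasSum_cosh z).add (Real.hasSum_sinh z)).mul_left (√z)⁻¹
  have hI0 : Summable fun n : ℕ => (z / 2) ^ (2 * n) / (n.factorial : ℝ) ^ 2 :=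
    .of_nonneg_of_le (fun n => by positivity) (I0_term_le hz) hexp.summable
  calc I0 z ≤ (√z)⁻¹ * (cosh z + sinh z) := hasSum_le (I0_term_le hz) hI0.hasSum hexp
    _ = exp z / √z := by rw [Real.cosh_add_sinh, div_eq_inv_mul]

theorem one_sub_exp_neg_le_min (a : ℝ) : 1 - exp (-a) ≤ min 1 a :=
  le_min (by linarith [exp_pos (-a)]) (by linarith [one_sub_le_exp_neg a])

theorem half_min_le_one_sub_exp_neg {a : ℝ} (ha : 0 ≤ a) : min 1 a / 2 ≤ 1 - exp (-a) := by
  have hexp : exp (-a) ≤ (a + 1)⁻¹ := by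
    rw [exp_neg]
    exact inv_anti₀ (by linarith) (add_one_le_exp a)
  have hinv : (a + 1)⁻¹ ≤ 1 - min 1 a / 2 := by
    rw [inv_le_iff_one_le_mul₀ (by linarith)]
    rcases min_cases 1 a with h | h <;> rw [h.1] <;> nlinarith
  linarith

/-- The factor `G` of the estimate, which has the size of the whole-space kernel `pk` for
`t ≤ x * y`. -/
noncomputable def freeProfile (t x y : ℝ) : ℝ :=
  (√(x * y * t))⁻¹ * exp (-(x - y) ^ 2 / (2 * t))

/-- The quantity `E` of the estimate: `freeProfile` with the boundary factor
`min 1 ((x - 1) * (y - 1) / t)` of killing at `1`. It is written out, rather than through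
`freeProfile`, in the form in which the main theorem displays it. -/
noncomputable def dirichletProfile (t x y : ℝ) : ℝ :=
  min 1 ((x - 1) * (y - 1) / t) * (√(x * y * t))⁻¹ * exp (-(x - y) ^ 2 / (2 * t))

theorem freeProfile_nonneg (t x y : ℝ) : 0 ≤ freeProfile t x y := by
  unfold freeProfile
  positivity

theorem dirichletProfile_eq_min_mul (t x y : ℝ) :
    dirichletProfile t x y = min 1 ((x - 1) * (y - 1) / t) * freeProfile t x y :=
  mul_assoc _ _ _

theorem dirichletProfile_comm (t x y : ℝ) : dirichletProfile t x y = dirichletProfile t y x := by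
  unfold dirichletProfile
  rw [mul_comm (x - 1), mul_comm x y, sub_sq_comm]

theorem dirichletProfile_nonneg {t x y : ℝ} (ht : 0 < t) (hx : 1 < x) (hy : 1 < y) :
    0 ≤ dirichletProfile t x y := by
  unfold dirichletProfile
  positivity

theorem pk_nonneg {t : ℝ} (ht : 0 < t) (x y : ℝ) : 0 ≤ pk t x y := by
  have := I0_nonneg (x * y / t)
  unfold pk
  positivity

theorem pk_le_freeProfile {t x y : ℝ} (ht : 0 < t) (hxy : 0 < x * y) :
    pk t x y ≤ freeProfile t x y := by
  have hz : 0 < x * y / t := by positivity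
  have hexp : exp (-(x ^ 2 + y ^ 2) / (2 * t)) * exp (x * y / t) =
      exp (-(x - y) ^ 2 / (2 * t)) := by
    rw [← exp_add]
    congr 1
    field_simp
    ring
  have hsqrt : √(x * y * t) = t * √(x * y / t) := by
    rw [show x * y * t = t ^ 2 * (x * y / t) by field_simp, sqrt_mul (sq_nonneg t), sqrt_sq ht.le]
  calc pk t x y
      ≤ t⁻¹ * exp (-(x ^ 2 + y ^ 2) / (2 * t)) * (exp (x * y / t) / √(x * y / t)) := by
        unfold pk
        gcongr
        exact I0_le_exp_div_sqrt hz
    _ = freeProfile t x y := by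
        rw [freeProfile, hsqrt, ← hexp, mul_inv]
        ring

theorem hker_comm (t x y : ℝ) : hker t x y = hker t y x := by
  unfold hker
  rw [mul_comm x y, sub_sq_comm, add_comm x y]

theorem sqrt_mul_hker_eq {t x y : ℝ} (ht : 0 < t) (hxy : 0 < x * y) :
    √(x * y) * hker t x y =
      (√(2 * π))⁻¹ * ((1 - exp (-(2 * ((x - 1) * (y - 1) / t)))) * freeProfile t x y) := by
  have hreflected : exp (-(x + y - 2) ^ 2 / (2 * t)) =
      exp (-(x - y) ^ 2 / (2 * t)) * exp (-(2 * ((x - 1) * (y - 1) / t))) := by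
    rw [← exp_add]
    congr 1
    field_simp
    ring
  have hpow : (2 * π * t) ^ (-(1 : ℝ) / 2) = (√(2 * π))⁻¹ * (√t)⁻¹ := by
    rw [neg_div, rpow_neg (by positivity), ← sqrt_eq_rpow, sqrt_mul (by positivity), mul_inv]
  have hinv : √(x * y) * (x * y)⁻¹ = (√(x * y))⁻¹ := by
    rw [← div_eq_mul_inv, sqrt_div_self']
    simp only [one_div]
  calc √(x * y) * hker t x y
      = (2 * π * t) ^ (-(1 : ℝ) / 2) * (√(x * y) * (x * y)⁻¹) *
          (exp (-(x - y) ^ 2 / (2 * t)) - exp (-(x + y - 2) ^ 2 / (2 * t))) := by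
        unfold hker
        ring
    _ = _ := by
        rw [hpow, hinv, hreflected, freeProfile, sqrt_mul hxy.le, mul_inv]
        ring

theorem inv_sqrt_two_pi_le_one : (√(2 * π))⁻¹ ≤ 1 :=
  inv_le_one_of_one_le₀ <| one_le_sqrt.2 <| by linarith [pi_gt_three]

theorem mul_dirichletProfile_le_sqrt_mul_hker {t x y : ℝ} (ht : 0 < t) (hx : 1 < x) (hy : 1 < y) :
    (√(2 * π))⁻¹ / 2 * dirichletProfile t x y ≤ √(x * y) * hker t x y := by
  set a := (x - 1) * (y - 1) / t with ha
  have ha₀ : 0 ≤ a := by positivity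
  have hG := freeProfile_nonneg t x y
  have hmin : min 1 a / 2 ≤ 1 - exp (-(2 * a)) :=
    calc min 1 a / 2 ≤ min 1 (2 * a) / 2 := by gcongr; linarith
      _ ≤ 1 - exp (-(2 * a)) := half_min_le_one_sub_exp_neg (by positivity)
  rw [sqrt_mul_hker_eq ht (by positivity), dirichletProfile_eq_min_mul, ← ha]
  calc (√(2 * π))⁻¹ / 2 * (min 1 a * freeProfile t x y)
      = (√(2 * π))⁻¹ * (min 1 a / 2 * freeProfile t x y) := by ring
    _ ≤ (√(2 * π))⁻¹ * ((1 - exp (-(2 * a))) * freeProfile t x y) := by gcongr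

theorem sqrt_mul_hker_le_mul_dirichletProfile {t x y : ℝ} (ht : 0 < t) (hx : 1 < x) (hy : 1 < y) :
    √(x * y) * hker t x y ≤ 2 * dirichletProfile t x y := by
  set a := (x - 1) * (y - 1) / t with ha
  have hG := freeProfile_nonneg t x y
  have hmin : 1 - exp (-(2 * a)) ≤ 2 * min 1 a :=
    calc 1 - exp (-(2 * a)) ≤ min 1 (2 * a) := one_sub_exp_neg_le_min _
      _ ≤ min (2 * 1) (2 * a) := by gcongr; norm_num
      _ = 2 * min 1 a := (mul_min_of_nonneg _ _ zero_le_two).symm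
  rw [sqrt_mul_hker_eq ht (by positivity), dirichletProfile_eq_min_mul, ← ha]
  calc (√(2 * π))⁻¹ * ((1 - exp (-(2 * a))) * freeProfile t x y)
      ≤ (√(2 * π))⁻¹ * (2 * min 1 a * freeProfile t x y) := by gcongr
    _ ≤ 1 * (2 * min 1 a * freeProfile t x y) := by
        gcongr
        exact inv_sqrt_two_pi_le_one
    _ = 2 * (min 1 a * freeProfile t x y) := by ring

/-- The mean at time `s` of the Brownian bridge from `x` to `y` of duration `s + t`. -/
noncomputable def bridgeMean (s t x y : ℝ) : ℝ := x + s * (y - x) / (s + t)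

theorem abs_bridgeMean_sub_one_add_one_le {t x y : ℝ} (ht : 4 ≤ t) (hx : 1 < x) (hx2 : x < 2)
    (hxy : t < x * y) : |bridgeMean 1 (t - 1) x y - 1| + 1 ≤ 10 * ((y - 1) / t) := by
  have ht₀ : 0 < t := by linarith
  have hty : t < 2 * y := by nlinarith
  have hmean : bridgeMean 1 (t - 1) x y = x + (y - x) / t := by
    rw [bridgeMean, one_mul, add_sub_cancel]
  have hincr : 0 ≤ (y - x) / t := div_nonneg (by linarith) ht₀.le
  rw [hmean, abs_of_nonneg (by linarith), sub_add_cancel, ← mul_div_assoc,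
    ← le_sub_iff_add_le, ← sub_div, le_div_iff₀ ht₀]
  nlinarith

theorem exp_mul_exp_le_bridge {s t : ℝ} (hs : 0 < s) (ht : 0 < t) (x y w : ℝ) :
    exp (-(x - w) ^ 2 / (2 * s)) * exp (-(w - y) ^ 2 / (2 * t)) ≤
      exp (-(x - y) ^ 2 / (2 * (s + t))) * exp (-(w - bridgeMean s t x y) ^ 2 / (2 * s)) := by
  rw [← exp_add, ← exp_add, exp_le_exp]
  have bridge_identity : -(x - w) ^ 2 / (2 * s) + -(w - y) ^ 2 / (2 * t) =
      -(x - y) ^ 2 / (2 * (s + t)) + -(w - bridgeMean s t x y) ^ 2 / (2 * s) -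
        (w - bridgeMean s t x y) ^ 2 / (2 * t) := by
    unfold bridgeMean
    field_simp
    ring
  rw [bridge_identity]
  exact sub_le_self _ (by positivity)

theorem freeProfile_mul_freeProfile_le {s t x y w : ℝ} (hs : 0 < s) (ht : 0 < t)
    (hx : 0 < x) (hy : 0 < y) (hw : 0 < w) :
    freeProfile s x w * freeProfile t w y * w ≤ √((s + t) / (s * t)) *
      (freeProfile (s + t) x y * exp (-(w - bridgeMean s t x y) ^ 2 / (2 * s))) := by
  have hsqrt : (√(x * w * s))⁻¹ * (√(w * y * t))⁻¹ * w =
      √((s + t) / (s * t)) * (√(x * y * (s + t)))⁻¹ := by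
    have hprod : √(x * w * s) * √(w * y * t) = w * √(x * y * (s * t)) := by
      rw [← sqrt_mul (by positivity),
        show x * w * s * (w * y * t) = w ^ 2 * (x * y * (s * t)) by ring,
        sqrt_mul (by positivity), sqrt_sq hw.le]
    rw [← mul_inv, hprod, mul_inv_rev, mul_assoc, inv_mul_cancel₀ hw.ne', mul_one, ← sqrt_inv,
      ← sqrt_inv, ← sqrt_mul (by positivity)]
    congr 1
    field_simp
  calc freeProfile s x w * freeProfile t w y * w
      = (√(x * w * s))⁻¹ * (√(w * y * t))⁻¹ * w *
          (exp (-(x - w) ^ 2 / (2 * s)) * exp (-(w - y) ^ 2 / (2 * t))) := by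
        unfold freeProfile
        ring
    _ ≤ √((s + t) / (s * t)) * (√(x * y * (s + t)))⁻¹ *
          (exp (-(x - y) ^ 2 / (2 * (s + t))) *
            exp (-(w - bridgeMean s t x y) ^ 2 / (2 * s))) := by
        rw [hsqrt]
        exact mul_le_mul_of_nonneg_left (exp_mul_exp_le_bridge hs ht x y w) (by positivity)
    _ = _ := by
        unfold freeProfile
        ring

theorem abs_le_exp_sq_div_four (u : ℝ) : |u| ≤ exp (u ^ 2 / 4) := by
  have h := add_one_le_exp (u ^ 2 / 4)
  nlinarith [sq_nonneg (|u| - 2), sq_abs u]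

theorem abs_sub_mul_exp_le (a m w : ℝ) :
    |w - a| * exp (-(w - m) ^ 2 / 2) ≤ (|m - a| + 1) * exp (-(1 / 4) * (w - m) ^ 2) := by
  have hdist : |w - a| ≤ (|m - a| + 1) * exp ((w - m) ^ 2 / 4) := by
    have hone : 1 ≤ exp ((w - m) ^ 2 / 4) := one_le_exp (by positivity)
    have htri := abs_sub_le w m a
    nlinarith [abs_le_exp_sq_div_four (w - m), abs_nonneg (m - a)]
  calc |w - a| * exp (-(w - m) ^ 2 / 2)
      ≤ (|m - a| + 1) * exp ((w - m) ^ 2 / 4) * exp (-(w - m) ^ 2 / 2) := by gcongr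
    _ = (|m - a| + 1) * exp (-(1 / 4) * (w - m) ^ 2) := by
      rw [mul_assoc, ← exp_add]
      congr 2
      ring

theorem integrable_exp_neg_mul_sub_sq {b : ℝ} (hb : 0 < b) (m : ℝ) :
    Integrable fun w : ℝ => exp (-b * (w - m) ^ 2) :=
  (integrable_exp_neg_mul_sq hb).comp_sub_right m

theorem integral_exp_neg_mul_sub_sq (b m : ℝ) :
    ∫ w : ℝ, exp (-b * (w - m) ^ 2) = √(π / b) := by
  rw [integral_sub_right_eq_self (fun w : ℝ => exp (-b * w ^ 2)) m, integral_gaussian]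

/-- The properties of the Dirichlet heat kernel that enter the estimate: domination by the
whole-space kernel, the Chapman-Kolmogorov equation on `(1, ∞)`, and the comparison (AC) with the
half-line Brownian kernel. -/
structure BesselSubkernel (p : ℝ → ℝ → ℝ → ℝ) : Prop where
  le_pk : ∀ ⦃t x y : ℝ⦄, 0 < t → 1 < x → 1 < y → p t x y ≤ pk t x y
  chapman_kolmogorov : ∀ ⦃s t x y : ℝ⦄, 0 < s → 0 < t → 1 < x → 1 < y →
    p (s + t) x y = ∫ w in Set.Ioi (1 : ℝ), p s x w * p t w y * w
  sqrt_mul_hker_le : ∀ ⦃t x y : ℝ⦄, 0 < t → 1 < x → 1 < y → √(x * y) * hker t x y ≤ p t x y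
  le_exp_mul_hker : ∀ ⦃t x y : ℝ⦄, 0 < t → 1 < x → 1 < y →
    p t x y ≤ exp (t / 8) * √(x * y) * hker t x y

namespace BesselSubkernel

variable {p : ℝ → ℝ → ℝ → ℝ} {t x y : ℝ}

theorem transpose (hp : BesselSubkernel p) : BesselSubkernel fun t x y => p t y x where
  le_pk t x y ht hx hy := by
    rw [pk, add_comm (x ^ 2), mul_comm x]
    exact hp.le_pk ht hy hx
  chapman_kolmogorov s t x y hs ht hx hy := by
    rw [add_comm, hp.chapman_kolmogorov ht hs hy hx]
    simp only [mul_comm (p t y _)]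
  sqrt_mul_hker_le t x y ht hx hy := by
    rw [hker_comm, mul_comm x]
    exact hp.sqrt_mul_hker_le ht hy hx
  le_exp_mul_hker t x y ht hx hy := by
    rw [hker_comm, mul_comm x]
    exact hp.le_exp_mul_hker ht hy hx

theorem le_freeProfile (hp : BesselSubkernel p) (ht : 0 < t) (hx : 1 < x) (hy : 1 < y) :
    p t x y ≤ freeProfile t x y :=
  (hp.le_pk ht hx hy).trans <| pk_le_freeProfile ht (by positivity)

theorem mul_dirichletProfile_le (hp : BesselSubkernel p) (ht : 0 < t) (hx : 1 < x) (hy : 1 < y) :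
    (√(2 * π))⁻¹ / 2 * dirichletProfile t x y ≤ p t x y :=
  (mul_dirichletProfile_le_sqrt_mul_hker ht hx hy).trans (hp.sqrt_mul_hker_le ht hx hy)

theorem nonneg (hp : BesselSubkernel p) (ht : 0 < t) (hx : 1 < x) (hy : 1 < y) : 0 ≤ p t x y :=
  (mul_nonneg (by positivity) (dirichletProfile_nonneg ht hx hy)).trans
    (hp.mul_dirichletProfile_le ht hx hy)

theorem le_mul_dirichletProfile_of_time_le_four (hp : BesselSubkernel p) (ht : 0 < t) (ht4 : t ≤ 4)
    (hx : 1 < x) (hy : 1 < y) : p t x y ≤ 4 * dirichletProfile t x y := by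
  have hD := dirichletProfile_nonneg ht hx hy
  have hexp : exp (t / 8) ≤ 2 := by
    rw [← le_log_iff_exp_le two_pos]
    linarith [log_two_gt_d9]
  calc p t x y ≤ exp (t / 8) * (√(x * y) * hker t x y) := by
        rw [← mul_assoc]
        exact hp.le_exp_mul_hker ht hx hy
    _ ≤ exp (t / 8) * (2 * dirichletProfile t x y) := by
        gcongr exp (t / 8) * ?_
        exact sqrt_mul_hker_le_mul_dirichletProfile ht hx hy
    _ ≤ 2 * (2 * dirichletProfile t x y) := by gcongr
    _ = 4 * dirichletProfile t x y := by ring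

theorem unit_time_le (hp : BesselSubkernel p) (hx : 1 < x) (hy : 1 < y) :
    p 1 x y ≤ 4 * ((x - 1) * |y - 1|) * freeProfile 1 x y := by
  have hG := freeProfile_nonneg 1 x y
  calc p 1 x y ≤ 4 * dirichletProfile 1 x y :=
        hp.le_mul_dirichletProfile_of_time_le_four one_pos (by norm_num) hx hy
    _ ≤ 4 * ((x - 1) * |y - 1| * freeProfile 1 x y) := by
        rw [dirichletProfile_eq_min_mul, div_one, abs_of_pos (sub_pos.2 hy)]
        gcongr
        exact min_le_right _ _
    _ = _ := (mul_assoc _ _ _).symm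

theorem chapman_kolmogorov_integrand_le (hp : BesselSubkernel p) (ht : 1 ≤ t) (hx : 1 < x)
    (hy : 1 < y) {w : ℝ} (hw : 1 < w) :
    p 1 x w * p t w y * w ≤ 8 * (x - 1) * freeProfile (1 + t) x y *
      (|bridgeMean 1 t x y - 1| + 1) * exp (-(1 / 4) * (w - bridgeMean 1 t x y) ^ 2) := by
  have ht₀ : 0 < t := by linarith
  have hG := freeProfile_nonneg (1 + t) x y
  have hG₁ := freeProfile_nonneg 1 x w
  have hnonneg := hp.nonneg ht₀ hw hy
  have hsqrt : √((1 + t) / (1 * t)) ≤ 2 := by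
    rw [sqrt_le_left zero_le_two, one_mul, div_le_iff₀ ht₀]
    linarith
  set m := bridgeMean 1 t x y with hm
  calc p 1 x w * p t w y * w
      ≤ 4 * ((x - 1) * |w - 1|) * freeProfile 1 x w * freeProfile t w y * w := by
        gcongr
        · exact hp.unit_time_le hx hw
        · exact hp.le_freeProfile ht₀ hw hy
    _ = 4 * (x - 1) * |w - 1| * (freeProfile 1 x w * freeProfile t w y * w) := by ring
    _ ≤ 4 * (x - 1) * |w - 1| * (2 * (freeProfile (1 + t) x y * exp (-(w - m) ^ 2 / 2))) := by
        have hprod := freeProfile_mul_freeProfile_le one_pos ht₀ (zero_lt_one.trans hx)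
          (zero_lt_one.trans hy) (zero_lt_one.trans hw)
        rw [← hm, mul_one 2] at hprod
        exact mul_le_mul_of_nonneg_left (hprod.trans (by gcongr)) (by positivity)
    _ = 8 * (x - 1) * freeProfile (1 + t) x y * (|w - 1| * exp (-(w - m) ^ 2 / 2)) := by ring
    _ ≤ 8 * (x - 1) * freeProfile (1 + t) x y *
          ((|m - 1| + 1) * exp (-(1 / 4) * (w - m) ^ 2)) :=
        mul_le_mul_of_nonneg_left (abs_sub_mul_exp_le 1 m w) (by positivity)
    _ = _ := (mul_assoc _ _ _).symm

theorem le_mul_bridgeMean (hp : BesselSubkernel p) (ht : 1 ≤ t) (hx : 1 < x) (hy : 1 < y) :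
    p (1 + t) x y ≤
      32 * (x - 1) * (|bridgeMean 1 t x y - 1| + 1) * freeProfile (1 + t) x y := by
  have ht₀ : 0 < t := by linarith
  have hG := freeProfile_nonneg (1 + t) x y
  set m := bridgeMean 1 t x y
  set K := 8 * (x - 1) * freeProfile (1 + t) x y * (|m - 1| + 1) with hK
  have hint : Integrable fun w : ℝ => K * exp (-(1 / 4) * (w - m) ^ 2) :=
    (integrable_exp_neg_mul_sub_sq (by norm_num) m).const_mul K
  have hgauss : ∫ w : ℝ, exp (-(1 / 4) * (w - m) ^ 2) ≤ 4 := by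
    rw [integral_exp_neg_mul_sub_sq, sqrt_le_left (by norm_num)]
    linarith [pi_le_four]
  calc p (1 + t) x y = ∫ w in Set.Ioi (1 : ℝ), p 1 x w * p t w y * w :=
        hp.chapman_kolmogorov one_pos ht₀ hx hy
    _ ≤ ∫ w in Set.Ioi (1 : ℝ), K * exp (-(1 / 4) * (w - m) ^ 2) := by
        refine integral_mono_of_nonneg ?_ hint.integrableOn ?_ <;>
          filter_upwards [self_mem_ae_restrict measurableSet_Ioi] with w (hw : 1 < w)
        · exact mul_nonneg (mul_nonneg (hp.nonneg one_pos hx hw) (hp.nonneg ht₀ hw hy))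
            (by positivity)
        · exact hp.chapman_kolmogorov_integrand_le ht hx hy hw
    _ ≤ ∫ w : ℝ, K * exp (-(1 / 4) * (w - m) ^ 2) :=
        setIntegral_le_integral hint (.of_forall fun w => by positivity)
    _ = K * ∫ w : ℝ, exp (-(1 / 4) * (w - m) ^ 2) := integral_const_mul _ _
    _ ≤ K * 4 := by gcongr
    _ = _ := by
        rw [hK]
        ring

theorem le_mul_dirichletProfile_of_lt_two (hp : BesselSubkernel p) (ht : 4 ≤ t) (hx : 1 < x)
    (hx2 : x < 2) (hy : 1 < y) (hxy : t < x * y) : p t x y ≤ 320 * dirichletProfile t x y := by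
  have ht₀ : 0 < t := by linarith
  have hG := freeProfile_nonneg t x y
  have hfree := hp.le_freeProfile ht₀ hx hy
  have hboundary : p t x y ≤ 320 * ((x - 1) * (y - 1) / t * freeProfile t x y) := by
    have hck := hp.le_mul_bridgeMean (t := t - 1) (by linarith) hx hy
    rw [add_sub_cancel] at hck
    calc p t x y ≤ 32 * (x - 1) * (10 * ((y - 1) / t)) * freeProfile t x y :=
          hck.trans <| by gcongr; exact abs_bridgeMean_sub_one_add_one_le ht hx hx2 hxy
      _ = _ := by ring
  rw [dirichletProfile_eq_min_mul]
  rcases min_choice 1 ((x - 1) * (y - 1) / t) with h | h <;> rw [h]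
  · linarith
  · exact hboundary

theorem le_mul_dirichletProfile_of_two_le (hp : BesselSubkernel p) (ht : 0 < t) (hx : 2 ≤ x)
    (hy : 2 ≤ y) (hxy : t < x * y) : p t x y ≤ 4 * dirichletProfile t x y := by
  have hG := freeProfile_nonneg t x y
  have hmin : 1 / 4 ≤ min 1 ((x - 1) * (y - 1) / t) := by
    refine le_min (by norm_num) ?_
    rw [le_div_iff₀ ht]
    nlinarith [mul_nonneg (sub_nonneg.2 hx) (sub_nonneg.2 hy)]
  calc p t x y ≤ freeProfile t x y := hp.le_freeProfile ht (by linarith) (by linarith)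
    _ = 4 * (1 / 4 * freeProfile t x y) := by ring
    _ ≤ 4 * dirichletProfile t x y := by rw [dirichletProfile_eq_min_mul]; gcongr

theorem le_mul_dirichletProfile (hp : BesselSubkernel p) (ht : 0 < t) (hx : 1 < x) (hy : 1 < y)
    (hxy : t < x * y) : p t x y ≤ 320 * dirichletProfile t x y := by
  have hD := dirichletProfile_nonneg ht hx hy
  rcases le_total t 4 with ht4 | ht4
  · linarith [hp.le_mul_dirichletProfile_of_time_le_four ht ht4 hx hy]
  rcases lt_or_ge x 2 with hx2 | hx2
  · exact hp.le_mul_dirichletProfile_of_lt_two ht4 hx hx2 hy hxy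
  rcases lt_or_ge y 2 with hy2 | hy2
  · rw [dirichletProfile_comm]
    exact hp.transpose.le_mul_dirichletProfile_of_lt_two ht4 hy hy2 hx (mul_comm x y ▸ hxy)
  · linarith [hp.le_mul_dirichletProfile_of_two_le ht hx2 hy2 hxy]

end BesselSubkernel

theorem BesselHK.besselSubkernel {p₁ : ℝ → ℝ → ℝ → ℝ} {q : ℝ → ℝ → ℝ} (H : BesselHK p₁ q) :
    BesselSubkernel p₁ where
  le_pk t x y ht hx hy := by
    rw [H.hunt ht hx hy]
    exact sub_le_self _ <| setIntegral_nonneg measurableSet_Ioo fun u hu =>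
      mul_nonneg (H.q_nonneg hx hu.1) (pk_nonneg (sub_pos.2 hu.2) _ _)
  chapman_kolmogorov _ _ _ _ hs ht hx hy := H.ck hs ht hx hy
  sqrt_mul_hker_le _ _ _ ht hx hy := (H.ac ht hx hy).1
  le_exp_mul_hker _ _ _ ht hx hy := (H.ac ht hx hy).2

theorem bessel_heat_kernel_estimate_large_general {p : ℝ → ℝ → ℝ → ℝ} (hp : BesselSubkernel p) :
    ∃ c C : ℝ, 0 < c ∧ c ≤ C ∧ ∀ t x y : ℝ, 0 < t → 1 < x → 1 < y → t < x * y →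
      c * dirichletProfile t x y ≤ p t x y ∧ p t x y ≤ C * dirichletProfile t x y :=
  ⟨(√(2 * π))⁻¹ / 2, 320, by positivity, by linarith [inv_sqrt_two_pi_le_one],
    fun _ _ _ ht hx hy hxy =>
      ⟨hp.mul_dirichletProfile_le ht hx hy, hp.le_mul_dirichletProfile ht hx hy hxy⟩⟩

theorem bessel_heat_kernel_estimate_large (p₁ : ℝ → ℝ → ℝ → ℝ) (q : ℝ → ℝ → ℝ)
    (H : BesselHK p₁ q) :
    ∃ c C : ℝ, 0 < c ∧ c ≤ C ∧ ∀ t x y : ℝ, 0 < t → 1 < x → 1 < y → t < x*y →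
      c * (min 1 ((x-1)*(y-1)/t) * (Real.sqrt (x*y*t))⁻¹ *
            Real.exp (-(x-y)^2/(2*t))) ≤ p₁ t x y ∧
      p₁ t x y ≤ C * (min 1 ((x-1)*(y-1)/t) * (Real.sqrt (x*y*t))⁻¹ *
            Real.exp (-(x-y)^2/(2*t))) :=
  bessel_heat_kernel_estimate_large_general H.besselSubkernel
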